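/- Let r > 0, θ ∈ ℝ, σ > 0, μ ∈ ℝ. Then the function f(x) = (1/(σ√π Γ(r/2))) · exp(θ(x−μ)/σ²) · (|x−μ|/(2√(θ²+σ²)))^{(r−1)/2} · K_{(r−1)/2}(√(θ²+σ²)|x−μ|/σ²) is a probability density function on ℝ; that is, f is nonnegative and ∫_{−∞}^{∞} f(x) dx = 1. -/

import Mathlib

open MeasureTheory ProbabilityTheory

/-- The modified Bessel function of the second kind `K_ν(x)`, for `x > 0` given by
`K_ν(x) = ∫₀^∞ exp(−x cosh t) cosh(ν t) dt`. -/
noncomputable def besselK (ν x : ℝ) : ℝ :=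
  ∫ t in Set.Ioi (0 : ℝ), Real.exp (-x * Real.cosh t) * Real.cosh (ν * t)

/-- The density of the variance-gamma distribution `VG(r, θ, σ, μ)`. -/
noncomputable def vgPDF (r θ σ μ x : ℝ) : ℝ :=
  1 / (σ * Real.sqrt Real.pi * Real.Gamma (r / 2)) * Real.exp (θ * (x - μ) / σ ^ 2) *
    (|x - μ| / (2 * Real.sqrt (θ ^ 2 + σ ^ 2))) ^ ((r - 1) / 2) *
    besselK ((r - 1) / 2) (Real.sqrt (θ ^ 2 + σ ^ 2) * |x - μ| / σ ^ 2)

/-!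
The variance-gamma law is a normal variance-mean mixture: if `V` is gamma distributed with shape
`r / 2` and rate `1 / 2`, and `X` given `V = v` is normal with mean `μ + θ v` and variance `σ² v`,
then `X` has density `vgPDF r θ σ μ`. Once this mixture formula is known for all `x ≠ μ`
(`vgPDF_eq_integral`), Tonelli's theorem reduces the total mass to those of the normal and gamma
densities, which are one.

The mixture formula rests on the integral representation
`∫₀^∞ v ^ (ν - 1) exp (-(z / 2) (v / k + k / v)) dv = 2 k ^ ν K_ν(z)`
(`integral_rpow_mul_exp_eq_besselK`), obtained by substituting `v = k eᵗ` and symmetrizing in `t`.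
-/

lemma besselK_nonneg (ν x : ℝ) : 0 ≤ besselK ν x :=
  integral_nonneg fun _ => mul_nonneg (Real.exp_pos _).le (Real.cosh_pos _).le

lemma sq_div_four_le_cosh (t : ℝ) : t ^ 2 / 4 ≤ Real.cosh t := by
  rw [← Real.cosh_abs, Real.cosh_eq]
  have h := Real.quadratic_le_exp_of_nonneg (abs_nonneg t)
  have h2 := Real.exp_pos (-|t|)
  rw [sq_abs] at h
  linarith [abs_nonneg t]

/-- The bound `t² / 4 ≤ cosh t` dominates the integrand by a Gaussian. -/
lemma integrable_exp_neg_mul_cosh_add {z : ℝ} (hz : 0 < z) (ν : ℝ) :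
    Integrable fun t : ℝ => Real.exp (-z * Real.cosh t + ν * t) := by
  have hb : 0 < ((z / 4 : ℝ) : ℂ).re := by simp; positivity
  refine (integrable_cexp_quadratic hb (ν : ℂ) 0).norm.mono' (by fun_prop) ?_
  refine Filter.Eventually.of_forall fun t => ?_
  rw [Real.norm_eq_abs, abs_of_pos (Real.exp_pos _), Complex.norm_exp, Real.exp_le_exp]
  have h := mul_le_mul_of_nonneg_left (sq_div_four_le_cosh t) hz.le
  have e : (-((z / 4 : ℝ) : ℂ) * (t : ℂ) ^ 2 + (ν : ℂ) * t + 0).re = -(z / 4) * t ^ 2 + ν * t := by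
    rw [← Complex.ofReal_re (-(z / 4) * t ^ 2 + ν * t)]
    congr 1
    push_cast
    ring
  rw [e]
  linarith

/-- The two-sided form of the integral defining `K_ν`, obtained by averaging over `t ↦ -t`. -/
lemma integral_exp_neg_mul_cosh_add {z : ℝ} (hz : 0 < z) (ν : ℝ) :
    ∫ t : ℝ, Real.exp (-z * Real.cosh t + ν * t) = 2 * besselK ν z := by
  have hi := integrable_exp_neg_mul_cosh_add hz ν
  have h1 : ∫ t : ℝ, Real.exp (-z * Real.cosh t) * Real.cosh (ν * t) = 2 * besselK ν z := by
    rw [besselK, ← integral_comp_abs]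
    refine integral_congr_ae (Filter.Eventually.of_forall fun t => ?_)
    have : Real.cosh (ν * |t|) = Real.cosh (ν * t) := by
      rw [← Real.cosh_abs, abs_mul, abs_abs, ← abs_mul, Real.cosh_abs]
    simp only [Real.cosh_abs, this]
  have h2 := integral_neg_eq_self (fun t : ℝ => Real.exp (-z * Real.cosh t + ν * t)) volume
  have h3 : ∫ t : ℝ, (Real.exp (-z * Real.cosh t + ν * t) +
      Real.exp (-z * Real.cosh (-t) + ν * (-t))) =
      2 * ∫ t : ℝ, Real.exp (-z * Real.cosh t) * Real.cosh (ν * t) := by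
    rw [← integral_const_mul]
    refine integral_congr_ae (Filter.Eventually.of_forall fun t => ?_)
    simp only [Real.cosh_neg, Real.exp_add, Real.cosh_eq (ν * t), mul_neg]
    ring
  rw [integral_add hi hi.comp_neg, h2, h1] at h3
  linarith

lemma integral_Ioi_eq_integral_comp_mul_exp {k : ℝ} (hk : 0 < k) (g : ℝ → ℝ) :
    ∫ v in Set.Ioi (0 : ℝ), g v = ∫ t : ℝ, k * Real.exp t * g (k * Real.exp t) := by
  have himg : (fun t => k * Real.exp t) '' Set.univ = Set.Ioi (0 : ℝ) := by
    ext v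
    simp only [Set.image_univ, Set.mem_range, Set.mem_Ioi]
    constructor
    · rintro ⟨t, rfl⟩
      positivity
    · intro hv
      exact ⟨Real.log (v / k), by rw [Real.exp_log (by positivity)]; field_simp⟩
  rw [← himg, integral_image_eq_integral_abs_deriv_smul (f' := fun t => k * Real.exp t)
    MeasurableSet.univ
    (fun t _ => ((Real.hasDerivAt_exp t).const_mul k).hasDerivWithinAt)
    (fun a _ b _ h => Real.exp_injective (mul_left_cancel₀ hk.ne' h)), setIntegral_univ]
  refine integral_congr_ae (Filter.Eventually.of_forall fun t => ?_)
  simp only [smul_eq_mul]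
  rw [abs_of_pos (by positivity)]

lemma integral_rpow_mul_exp_eq_besselK {k z : ℝ} (hk : 0 < k) (hz : 0 < z) (ν : ℝ) :
    ∫ v in Set.Ioi (0 : ℝ), v ^ (ν - 1) * Real.exp (-(z / 2) * (v / k + k / v)) =
      2 * k ^ ν * besselK ν z := by
  rw [integral_Ioi_eq_integral_comp_mul_exp hk, mul_comm 2, mul_assoc,
    ← integral_exp_neg_mul_cosh_add hz, ← integral_const_mul]
  refine integral_congr_ae (Filter.Eventually.of_forall fun t => ?_)
  have he := Real.exp_pos t
  have h1 : k * Real.exp t * (k * Real.exp t) ^ (ν - 1) = k ^ ν * Real.exp (ν * t) := by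
    rw [Real.rpow_sub_one (by positivity), Real.mul_rpow hk.le he.le, ← Real.exp_mul, mul_comm t]
    field_simp
  have h2 : -(z / 2) * (k * Real.exp t / k + k / (k * Real.exp t)) = -z * Real.cosh t := by
    rw [Real.cosh_eq, Real.exp_neg]
    field_simp
  simp only
  rw [← mul_assoc, h1, h2, Real.exp_add]
  ring

/-- The joint density at `(x, v)` of a gamma variable `V` of shape `r / 2` and rate `1 / 2` and a
variable `X` which given `V = v` is normal with mean `μ + θ v` and variance `σ² v`.
It vanishes for `v ≤ 0`. -/
noncomputable def vgJoint (r θ σ μ x v : ℝ) : ℝ :=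
  gammaPDFReal (r / 2) (1 / 2) v * gaussianPDFReal (μ + θ * v) (σ ^ 2 * v).toNNReal x

lemma vgJoint_of_nonpos (r θ μ x : ℝ) {σ v : ℝ} (hv : v ≤ 0) : vgJoint r θ σ μ x v = 0 := by
  have : (σ ^ 2 * v).toNNReal = 0 :=
    Real.toNNReal_of_nonpos (mul_nonpos_of_nonneg_of_nonpos (sq_nonneg _) hv)
  simp [vgJoint, this]

/-- Completing the square separates `vgJoint` into a factor free of `v` and the integrand of
`integral_rpow_mul_exp_eq_besselK` with `ν = (r - 1) / 2`, `k = |x - μ| / √(θ² + σ²)` and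
`z = √(θ² + σ²) |x - μ| / σ²`. -/
lemma vgJoint_of_pos (r θ μ x : ℝ) {σ v : ℝ} (hσ : 0 < σ) (hv : 0 < v)
    (hx : x ≠ μ) :
    vgJoint r θ σ μ x v =
      (1 / 2) ^ (r / 2) / Real.Gamma (r / 2) * (σ * Real.sqrt (2 * Real.pi))⁻¹ *
        Real.exp (θ * (x - μ) / σ ^ 2) *
        (v ^ ((r - 1) / 2 - 1) * Real.exp (-(Real.sqrt (θ ^ 2 + σ ^ 2) * |x - μ| / σ ^ 2 / 2) *
          (v / (|x - μ| / Real.sqrt (θ ^ 2 + σ ^ 2)) +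
            |x - μ| / Real.sqrt (θ ^ 2 + σ ^ 2) / v))) := by
  have hy : 0 < |x - μ| := abs_pos.mpr (sub_ne_zero.mpr hx)
  have hc : 0 < Real.sqrt (θ ^ 2 + σ ^ 2) := Real.sqrt_pos.mpr (by positivity)
  have hc2 : Real.sqrt (θ ^ 2 + σ ^ 2) ^ 2 = θ ^ 2 + σ ^ 2 := Real.sq_sqrt (by positivity)
  have hy2 : |x - μ| ^ 2 = (x - μ) ^ 2 := sq_abs _
  have hsq : Real.sqrt (2 * Real.pi * (σ ^ 2 * v)) =
      σ * Real.sqrt (2 * Real.pi) * v ^ (1 / 2 : ℝ) := by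
    rw [Real.sqrt_mul (by positivity), Real.sqrt_mul (sq_nonneg σ), Real.sqrt_sq hσ.le,
      Real.sqrt_eq_rpow v]
    ring
  have hpow : v ^ (r / 2 - 1) = v ^ ((r - 1) / 2 - 1) * v ^ (1 / 2 : ℝ) := by
    rw [← Real.rpow_add hv]
    congr 1
    ring
  have hexp : -(1 / 2 * v) + -(x - (μ + θ * v)) ^ 2 / (2 * (σ ^ 2 * v)) =
      θ * (x - μ) / σ ^ 2 + -(Real.sqrt (θ ^ 2 + σ ^ 2) * |x - μ| / σ ^ 2 / 2) *
          (v / (|x - μ| / Real.sqrt (θ ^ 2 + σ ^ 2)) +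
            |x - μ| / Real.sqrt (θ ^ 2 + σ ^ 2) / v) := by
    have : Real.sqrt (θ ^ 2 + σ ^ 2) * |x - μ| / σ ^ 2 / 2 *
          (v / (|x - μ| / Real.sqrt (θ ^ 2 + σ ^ 2)) +
            |x - μ| / Real.sqrt (θ ^ 2 + σ ^ 2) / v) =
          (Real.sqrt (θ ^ 2 + σ ^ 2) ^ 2 * v + |x - μ| ^ 2 / v) / (2 * σ ^ 2) := by
      field_simp
    rw [neg_mul, this, hc2, hy2]
    field_simp
    ring
  have hvp : 0 < v ^ (1 / 2 : ℝ) := Real.rpow_pos_of_pos hv _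
  rw [vgJoint, gammaPDFReal, if_pos hv.le, gaussianPDFReal,
    Real.coe_toNNReal _ (by positivity), hsq, hpow]
  generalize v ^ (1 / 2 : ℝ) = w at hvp
  calc _ = (1 / 2) ^ (r / 2) / Real.Gamma (r / 2) * (σ * Real.sqrt (2 * Real.pi))⁻¹ *
        v ^ ((r - 1) / 2 - 1) *
        Real.exp (-(1 / 2 * v) + -(x - (μ + θ * v)) ^ 2 / (2 * (σ ^ 2 * v))) := by
        rw [Real.exp_add]
        field_simp
    _ = _ := by
        rw [hexp, Real.exp_add]
        ring

/-- The variance-gamma density is the marginal in `x` of the joint density `vgJoint`. -/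
lemma vgPDF_eq_integral {r σ : ℝ} (θ μ x : ℝ) (hr : 0 < r) (hσ : 0 < σ) (hx : x ≠ μ) :
    vgPDF r θ σ μ x = ∫ v, vgJoint r θ σ μ x v := by
  have hy : 0 < |x - μ| := abs_pos.mpr (sub_ne_zero.mpr hx)
  have hc : 0 < Real.sqrt (θ ^ 2 + σ ^ 2) := Real.sqrt_pos.mpr (by positivity)
  have hG : 0 < Real.Gamma (r / 2) := Real.Gamma_pos_of_pos (by positivity)
  rw [← setIntegral_eq_integral_of_forall_compl_eq_zero (s := Set.Ioi 0)
    (fun v hv => vgJoint_of_nonpos r θ μ x (not_lt.mp hv)),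
    setIntegral_congr_fun measurableSet_Ioi
      (fun v hv => vgJoint_of_pos r θ μ x hσ hv hx),
    integral_const_mul, integral_rpow_mul_exp_eq_besselK (by positivity) (by positivity), vgPDF]
  -- The powers of two cancel: `2 ^ (-r / 2) * 2 ^ (-1 / 2) * 2 = 2 ^ (-(r - 1) / 2)`.
  have h2 : (1 / 2 : ℝ) ^ (r / 2) * 2 = Real.sqrt 2 * (1 / 2) ^ ((r - 1) / 2) := by
    have : r / 2 = (r - 1) / 2 + 1 / 2 := by ring
    rw [this, Real.rpow_add (by norm_num), ← Real.sqrt_eq_rpow, Real.sqrt_div (by norm_num),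
      Real.sqrt_one]
    have := Real.sq_sqrt (show (0 : ℝ) ≤ 2 by norm_num)
    field_simp
    linarith
  have h3 : |x - μ| / (2 * Real.sqrt (θ ^ 2 + σ ^ 2)) =
      1 / 2 * (|x - μ| / Real.sqrt (θ ^ 2 + σ ^ 2)) := by
    field_simp
  rw [h3, Real.mul_rpow (by norm_num) (by positivity), Real.sqrt_mul (by norm_num)]
  have h4 : (1 / 2 : ℝ) ^ (r / 2) = Real.sqrt 2 * (1 / 2) ^ ((r - 1) / 2) / 2 := by linarith
  rw [h4]
  field_simp

lemma integrable_gammaPDFReal {a b : ℝ} (ha : 0 < a) (hb : 0 < b) :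
    Integrable (gammaPDFReal a b) := by
  refine ⟨(measurable_gammaPDFReal a b).aestronglyMeasurable, ?_⟩
  rw [hasFiniteIntegral_iff_ofReal (Filter.Eventually.of_forall (gammaPDFReal_nonneg ha hb))]
  exact (lintegral_gammaPDF_eq_one ha hb).trans_lt ENNReal.one_lt_top

lemma integral_gammaPDFReal {a b : ℝ} (ha : 0 < a) (hb : 0 < b) :
    ∫ v, gammaPDFReal a b v = 1 := by
  rw [integral_eq_lintegral_of_nonneg_ae (Filter.Eventually.of_forall (gammaPDFReal_nonneg ha hb))
    (measurable_gammaPDFReal a b).aestronglyMeasurable]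
  exact (ENNReal.toReal_eq_one_iff _).mpr (lintegral_gammaPDF_eq_one ha hb)

lemma vgJoint_nonneg {r : ℝ} (θ σ μ x v : ℝ) (hr : 0 < r) : 0 ≤ vgJoint r θ σ μ x v :=
  mul_nonneg (gammaPDFReal_nonneg (by positivity) (by norm_num) _) (gaussianPDFReal_nonneg _ _ _)

lemma measurable_vgJoint (r θ σ μ : ℝ) :
    Measurable (Function.uncurry (vgJoint r θ σ μ)) := by
  unfold Function.uncurry vgJoint gaussianPDFReal
  fun_prop

lemma integral_vgJoint {r θ σ μ v : ℝ} (hσ : 0 < σ) (hv : v ≠ 0) :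
    ∫ x, vgJoint r θ σ μ x v = gammaPDFReal (r / 2) (1 / 2) v := by
  simp only [vgJoint]
  rw [integral_const_mul]
  rcases hv.lt_or_gt with hv | hv
  · simp [gammaPDFReal, not_le.mpr hv]
  · rw [integral_gaussianPDFReal_eq_one _ (by simpa using by positivity), mul_one]

lemma integrable_vgJoint {r σ : ℝ} (θ μ : ℝ) (hr : 0 < r) (hσ : 0 < σ) :
    Integrable (Function.uncurry (vgJoint r θ σ μ)) (volume.prod volume) := by
  rw [integrable_prod_iff' (measurable_vgJoint r θ σ μ).aestronglyMeasurable]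
  refine ⟨Filter.Eventually.of_forall fun v =>
    (integrable_gaussianPDFReal (μ + θ * v) (σ ^ 2 * v).toNNReal).const_mul
      (gammaPDFReal (r / 2) (1 / 2) v), ?_⟩
  refine (integrable_gammaPDFReal (a := r / 2) (b := 1 / 2) (by positivity) (by norm_num)).congr ?_
  -- At `v = 0` the conditional variance is zero, where `gaussianPDFReal` vanishes identically.
  filter_upwards [Measure.ae_ne volume (0 : ℝ)] with v hv
  simp only [Function.uncurry_apply_pair, Real.norm_eq_abs,
    abs_of_nonneg (vgJoint_nonneg _ _ _ _ _ hr)]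
  exact (integral_vgJoint hσ hv).symm

/-- For `r > 0`, `θ ∈ ℝ`, `σ > 0`, `μ ∈ ℝ`, the variance-gamma density with parameters
`(r, θ, σ, μ)` is a probability density function: it is nonnegative and integrates to one. -/
theorem vgPDF_is_probability_density
    (r θ σ μ : ℝ) (hr : 0 < r) (hσ : 0 < σ) :
    (∀ x : ℝ, 0 ≤ vgPDF r θ σ μ x) ∧ (∫ x : ℝ, vgPDF r θ σ μ x = 1) := by
  constructor
  · intro x
    have hG : 0 < Real.Gamma (r / 2) := Real.Gamma_pos_of_pos (by positivity)
    have hK := besselK_nonneg ((r - 1) / 2) (Real.sqrt (θ ^ 2 + σ ^ 2) * |x - μ| / σ ^ 2)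
    unfold vgPDF
    positivity
  · calc ∫ x, vgPDF r θ σ μ x = ∫ x, ∫ v, vgJoint r θ σ μ x v := by
          refine integral_congr_ae ?_
          filter_upwards [Measure.ae_ne volume μ] with x hx
          exact vgPDF_eq_integral θ μ x hr hσ hx
      _ = ∫ v, ∫ x, vgJoint r θ σ μ x v := integral_integral_swap (integrable_vgJoint θ μ hr hσ)
      _ = ∫ v, gammaPDFReal (r / 2) (1 / 2) v := by
          refine integral_congr_ae ?_
          filter_upwards [Measure.ae_ne volume (0 : ℝ)] with v hv
          exact integral_vgJoint hσ hv
      _ = 1 := integral_gammaPDFReal (by positivity) (by norm_num)
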